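/- Let W be a standard Brownian motion. For γ₀ > −1/2, γ₀ ≠ 0, define U₁ = (1/γ₀)∫₀¹ (s^{γ₀} − (1+γ₀)s^{2γ₀}) (s^{−γ₀−1}W(s) − W(1)) ds. Then E[U₁] = 0 and Var(U₁) = (2 + 6γ₀ + 5γ₀²)/((1+γ₀)²(1+2γ₀)²). -/

import Mathlib

/-!
Put `f(s) = s^γ - (1+γ) s^{2γ}` and `w(s) = f(s) s^{-γ-1} = s⁻¹ - (1+γ) s^{γ-1}`, so that
`γ U₁ = ∫₀¹ G_s ds` with `G_s = w(s) W(s) - f(s) W(1)`. The `L²(μ)` norm of `G_s` is at most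
`|w(s)| √s + |f(s)|`, which is integrable on `(0,1]` exactly because `γ > -1/2`; hence Fubini
applies to both the first and the second moment of `∫₀¹ G_s ds` (`moments_of_integral`). The mean
vanishes since `W` is centred, and
`E[G_s G_t] = w(s) w(t) min(s,t) - s w(s) f(t) - f(s) t w(t) + f(s) f(t)`.

On integrating over the unit square, the mixed terms drop out because
`∫₀ᵗ s w(s) ds = t - t^{γ+1}` vanishes at `t = 1`. By symmetry, the term with the minimum is twice
the integral over the triangle `s ≤ t` (`integral_prod_min`), that is `2 ∫₀¹ w(t) (t - t^{γ+1}) dt`,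
which contains nothing but powers of `t`. The last term is `(∫₀¹ f)²`.
-/

open MeasureTheory ProbabilityTheory

/-- A standard Brownian motion on `[0,∞)`: continuous paths started at `0`, measurable
marginals, Gaussian increments with variance `t - s`, independent of the past. -/
def IsStdBrownian {Ω : Type*} [MeasurableSpace Ω] (μ : Measure Ω) (W : ℝ → Ω → ℝ) : Prop :=
  IsProbabilityMeasure μ ∧
  (∀ ω, W 0 ω = 0) ∧
  (∀ ω, Continuous fun s => W s ω) ∧
  (∀ s, Measurable (W s)) ∧
  (∀ s t : ℝ, 0 ≤ s → s ≤ t →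
    Measure.map (fun ω => W t ω - W s ω) μ = gaussianReal 0 (Real.toNNReal (t - s))) ∧
  (∀ s t : ℝ, 0 ≤ s → s ≤ t → IndepFun (W s) (fun ω => W t ω - W s ω) μ)

/-- `U₁ = (1/γ)∫₀¹ (s^γ - (1+γ)s^{2γ})(s^{-γ-1}W(s) - W(1)) ds`. -/
noncomputable def Ustat1 {Ω : Type*} (W : ℝ → Ω → ℝ) (γ : ℝ) (ω : Ω) : ℝ :=
  (1/γ) * ∫ s in Set.Ioc (0:ℝ) 1,
    (s ^ γ - (1+γ) * s ^ (2*γ)) * (s ^ (-γ-1) * W s ω - W 1 ω)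

/-- `U₂ = (1+γ)∫₀¹ s^{2γ}(s^{-γ-1}W(s) - W(1)) ds`. -/
noncomputable def Ustat2 {Ω : Type*} (W : ℝ → Ω → ℝ) (γ : ℝ) (ω : Ω) : ℝ :=
  (1+γ) * ∫ s in Set.Ioc (0:ℝ) 1, s ^ (2*γ) * (s ^ (-γ-1) * W s ω - W 1 ω)


/-! ### Moments of parameter integrals -/

theorem integral_sub_sub_add {α : Type*} [MeasurableSpace α] {μ : Measure α} {a b c d : α → ℝ}
    (ha : Integrable a μ) (hb : Integrable b μ) (hc : Integrable c μ) (hd : Integrable d μ) :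
    ∫ x, (a x - b x - c x + d x) ∂μ =
      ∫ x, a x ∂μ - ∫ x, b x ∂μ - ∫ x, c x ∂μ + ∫ x, d x ∂μ := by
  have h1 : Integrable (fun x => a x - b x) μ := ha.sub hb
  have h2 : Integrable (fun x => a x - b x - c x) μ := h1.sub hc
  rw [integral_add h2 hd, integral_sub h1 hc, integral_sub ha hb]

/-- First and second moments of a parameter integral `∫ G s ds` of random variables. The
hypothesis is Minkowski's: the `L²` norms of the `G s` have an integrable majorant `B`. Positivity
of `B` allows the weighted inequality `|xy| ≤ (b/2a) x² + (a/2b) y²` to stand in for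
Cauchy–Schwarz. -/
theorem moments_of_integral {Ω α : Type*} [MeasurableSpace Ω] [MeasurableSpace α]
    {μ : Measure Ω} [IsProbabilityMeasure μ] {ν : Measure α} [SFinite ν] {G : α → Ω → ℝ}
    (hG : Measurable (Function.uncurry G)) {B : α → ℝ} (hB : Integrable B ν)
    (hBpos : ∀ᵐ s ∂ν, 0 < B s) (hL2 : ∀ᵐ s ∂ν, MemLp (G s) 2 μ)
    (hGB : ∀ᵐ s ∂ν, ∫ ω, G s ω ^ 2 ∂μ ≤ B s ^ 2) :
    (∫ ω, ∫ s, G s ω ∂ν ∂μ = ∫ s, ∫ ω, G s ω ∂μ ∂ν) ∧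
    ∫ ω, (∫ s, G s ω ∂ν) ^ 2 ∂μ = ∫ z, ∫ ω, G z.1 ω * G z.2 ω ∂μ ∂(ν.prod ν) := by
  constructor
  · refine (integral_integral_swap ?_).symm
    rw [integrable_prod_iff hG.aestronglyMeasurable]
    refine ⟨?_, hB.mono' ?_ ?_⟩
    · filter_upwards [hL2] with s hs using hs.integrable (by norm_num)
    · exact hG.norm.aestronglyMeasurable.integral_prod_right'
    · filter_upwards [hBpos, hL2, hGB] with s hb hs hgb
      rw [Real.norm_of_nonneg (integral_nonneg fun _ => norm_nonneg _)]
      have hi : Integrable (fun ω => 1 / (2 * B s) * G s ω ^ 2 + B s / 2) μ :=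
        (hs.integrable_sq.const_mul _).add (integrable_const _)
      calc ∫ ω, ‖Function.uncurry G (s, ω)‖ ∂μ
          ≤ ∫ ω, (1 / (2 * B s) * G s ω ^ 2 + B s / 2) ∂μ := by
            refine integral_mono (hs.integrable (by norm_num)).norm hi fun ω => ?_
            have h := sq_nonneg (|G s ω| - B s)
            simp only [Function.uncurry, Real.norm_eq_abs]
            rw [← sq_abs (G s ω), ← sub_nonneg]
            have : 1 / (2 * B s) * |G s ω| ^ 2 + B s / 2 - |G s ω|
                = (|G s ω| - B s) ^ 2 / (2 * B s) := by field_simp; ring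
            rw [this]; positivity
        _ = 1 / (2 * B s) * (∫ ω, G s ω ^ 2 ∂μ) + B s / 2 := by
            rw [integral_add (hs.integrable_sq.const_mul _) (integrable_const _),
              integral_const_mul]
            simp
        _ ≤ 1 / (2 * B s) * B s ^ 2 + B s / 2 := by gcongr
        _ = B s := by field_simp; ring
  · have hm : Measurable fun p : (α × α) × Ω => G p.1.1 p.2 * G p.1.2 p.2 :=
      (hG.comp (f := fun p : (α × α) × Ω => (p.1.1, p.2)) (by fun_prop)).mul
        (hG.comp (f := fun p : (α × α) × Ω => (p.1.2, p.2)) (by fun_prop))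
    have key : Integrable (Function.uncurry fun (z : α × α) ω => G z.1 ω * G z.2 ω)
        ((ν.prod ν).prod μ) := by
      refine (integrable_prod_iff hm.aestronglyMeasurable).2 ?_
      have all := hBpos.and (hL2.and hGB)
      have a1 := Measure.quasiMeasurePreserving_fst (μ := ν) (ν := ν) |>.ae all
      have a2 := Measure.quasiMeasurePreserving_snd (μ := ν) (ν := ν) |>.ae all
      refine ⟨?_, (hB.mul_prod hB).mono' ?_ ?_⟩
      · filter_upwards [a1, a2] with z h1 h2 using h1.2.1.integrable_mul h2.2.1
      · exact hm.norm.aestronglyMeasurable.integral_prod_right'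
      · filter_upwards [a1, a2] with z ⟨p1, l1, g1⟩ ⟨p2, l2, g2⟩
        rw [Real.norm_of_nonneg (integral_nonneg fun _ => norm_nonneg _)]
        have i1 := l1.integrable_sq.const_mul (B z.2 / (2 * B z.1))
        have i2 := l2.integrable_sq.const_mul (B z.1 / (2 * B z.2))
        calc ∫ ω, ‖G z.1 ω * G z.2 ω‖ ∂μ
            ≤ ∫ ω, (B z.2 / (2 * B z.1) * G z.1 ω ^ 2 + B z.1 / (2 * B z.2) * G z.2 ω ^ 2) ∂μ := by
              refine integral_mono (l1.integrable_mul l2).norm (i1.add i2) fun ω => ?_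
              simp only [Real.norm_eq_abs, abs_mul]
              rw [← sq_abs (G z.1 ω), ← sq_abs (G z.2 ω), ← sub_nonneg]
              have : B z.2 / (2 * B z.1) * |G z.1 ω| ^ 2 + B z.1 / (2 * B z.2) * |G z.2 ω| ^ 2
                  - |G z.1 ω| * |G z.2 ω|
                  = (B z.2 * |G z.1 ω| - B z.1 * |G z.2 ω|) ^ 2 / (2 * B z.1 * B z.2) := by
                field_simp; ring
              rw [this]; positivity
          _ = B z.2 / (2 * B z.1) * (∫ ω, G z.1 ω ^ 2 ∂μ)
                + B z.1 / (2 * B z.2) * ∫ ω, G z.2 ω ^ 2 ∂μ := by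
              rw [integral_add i1 i2, integral_const_mul, integral_const_mul]
          _ ≤ B z.2 / (2 * B z.1) * B z.1 ^ 2 + B z.1 / (2 * B z.2) * B z.2 ^ 2 := by gcongr
          _ = B z.1 * B z.2 := by field_simp; ring
    rw [integral_integral_swap key]
    congr with ω
    rw [sq, integral_prod_mul (fun s => G s ω) (fun s => G s ω)]

/-! ### Second-order structure of Brownian motion -/

namespace IsStdBrownian

variable {Ω : Type*} [MeasurableSpace Ω] {μ : Measure Ω} {W : ℝ → Ω → ℝ}

theorem map_eq (hW : IsStdBrownian μ W) {s : ℝ} (hs : 0 ≤ s) :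
    Measure.map (W s) μ = gaussianReal 0 s.toNNReal := by
  obtain ⟨_, h0, _, _, hinc, _⟩ := hW
  simpa [h0] using hinc 0 s le_rfl hs

theorem memLp (hW : IsStdBrownian μ W) {s : ℝ} (hs : 0 ≤ s) : MemLp (W s) 2 μ := by
  have h := memLp_id_gaussianReal (μ := 0) (v := s.toNNReal) 2
  rw [← hW.map_eq hs, memLp_map_measure_iff aestronglyMeasurable_id
    (hW.2.2.2.1 s).aemeasurable] at h
  exact h

theorem integral_eq (hW : IsStdBrownian μ W) {s : ℝ} (hs : 0 ≤ s) : ∫ ω, W s ω ∂μ = 0 := by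
  have h := integral_id_gaussianReal (μ := 0) (v := s.toNNReal)
  rwa [← hW.map_eq hs, integral_map (hW.2.2.2.1 s).aemeasurable (by fun_prop)] at h

theorem integral_sq (hW : IsStdBrownian μ W) {s : ℝ} (hs : 0 ≤ s) :
    ∫ ω, W s ω ^ 2 ∂μ = s := by
  have h := variance_id_gaussianReal (μ := 0) (v := s.toNNReal)
  rw [variance_of_integral_eq_zero aemeasurable_id integral_id_gaussianReal,
    ← hW.map_eq hs, integral_map (hW.2.2.2.1 s).aemeasurable (by fun_prop)] at h
  simpa [hs] using h

theorem integral_mul_of_le (hW : IsStdBrownian μ W) {s t : ℝ} (hs : 0 ≤ s) (hst : s ≤ t) :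
    ∫ ω, W s ω * W t ω ∂μ = s := by
  have := hW.1
  have hS := hW.memLp hs
  have hD := (hW.memLp (hs.trans hst)).sub hS
  have hind := (hW.2.2.2.2.2 s t hs hst).integral_mul_eq_mul_integral
    hS.aestronglyMeasurable hD.aestronglyMeasurable
  rw [hW.integral_eq hs, zero_mul] at hind
  calc ∫ ω, W s ω * W t ω ∂μ = ∫ ω, (W s ω ^ 2 + (W s * fun ω => W t ω - W s ω) ω) ∂μ := by
        congr with ω; simp only [Pi.mul_apply]; ring
    _ = s := by
        have hi : Integrable (W s * fun ω => W t ω - W s ω) μ := hS.integrable_mul hD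
        rw [integral_add hS.integrable_sq hi, hind, hW.integral_sq hs,
          add_zero]

theorem integral_mul (hW : IsStdBrownian μ W) {s t : ℝ} (hs : 0 ≤ s) (ht : 0 ≤ t) :
    ∫ ω, W s ω * W t ω ∂μ = min s t := by
  rcases le_total s t with h | h
  · rw [hW.integral_mul_of_le hs h, min_eq_left h]
  · simp_rw [mul_comm (W s _)]
    rw [hW.integral_mul_of_le ht h, min_eq_right h]

end IsStdBrownian

/-! ### The kernel `min s t` on the unit square -/

/-- Integration of a Brownian covariance against a product weight, reduced to the triangle `s ≤ t`
by symmetry. The hypothesis `hwi` suffices because `min s t ≤ √s √t`. -/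
theorem integral_prod_min {w : ℝ → ℝ} (hw : Measurable w)
    (hwi : IntegrableOn (fun s => w s * √s) (Set.Ioc 0 1)) :
    Integrable (fun z : ℝ × ℝ => w z.1 * w z.2 * min z.1 z.2)
      ((volume.restrict (Set.Ioc 0 1)).prod (volume.restrict (Set.Ioc 0 1))) ∧
    ∫ z, w z.1 * w z.2 * min z.1 z.2
      ∂((volume.restrict (Set.Ioc (0:ℝ) 1)).prod (volume.restrict (Set.Ioc (0:ℝ) 1))) =
    2 * ∫ t in Set.Ioc (0:ℝ) 1, w t * ∫ s in Set.Ioc 0 t, w s * s := by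
  set ν := volume.restrict (Set.Ioc (0:ℝ) 1) with hν
  have hmem : ∀ᵐ s ∂ν, s ∈ Set.Ioc (0:ℝ) 1 := ae_restrict_mem measurableSet_Ioc
  have m1 := Measure.quasiMeasurePreserving_fst (μ := ν) (ν := ν) |>.ae hmem
  have m2 := Measure.quasiMeasurePreserving_snd (μ := ν) (ν := ν) |>.ae hmem
  set k : ℝ × ℝ → ℝ := fun z => w z.1 * w z.2 * min z.1 z.2 with hk
  have hki : Integrable k (ν.prod ν) := by
    refine (Integrable.mul_prod hwi hwi).mono (by fun_prop) ?_
    filter_upwards [m1, m2] with z h1 h2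
    simp only [hk, norm_mul, Real.norm_eq_abs]
    rw [abs_of_nonneg (le_min h1.1.le h2.1.le), abs_of_nonneg (Real.sqrt_nonneg _),
      abs_of_nonneg (Real.sqrt_nonneg _)]
    have : min z.1 z.2 ≤ √z.1 * √z.2 := by
      rw [← Real.sqrt_mul h1.1.le]
      apply Real.le_sqrt_of_sq_le
      rw [sq]
      exact mul_le_mul (min_le_left _ _) (min_le_right _ _) (le_min h1.1.le h2.1.le) h1.1.le
    calc |w z.1| * |w z.2| * min z.1 z.2 ≤ |w z.1| * |w z.2| * (√z.1 * √z.2) := by gcongr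
      _ = _ := by ring
  refine ⟨hki, ?_⟩
  have hA : MeasurableSet {z : ℝ × ℝ | z.1 ≤ z.2} :=
    measurableSet_le measurable_fst measurable_snd
  have hA' : MeasurableSet {z : ℝ × ℝ | z.1 < z.2} :=
    measurableSet_lt measurable_fst measurable_snd
  have e1 : ∫ z, k z ∂(ν.prod ν) = ∫ z, Set.indicator {z | z.1 ≤ z.2} k z ∂(ν.prod ν)
      + ∫ z, Set.indicator {z | z.1 < z.2} k z ∂(ν.prod ν) := by
    have hi : Integrable (fun z => Set.indicator {z : ℝ × ℝ | z.1 < z.2} k z.swap) (ν.prod ν) :=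
      (hki.indicator hA').swap
    rw [← integral_prod_swap (Set.indicator {z : ℝ × ℝ | z.1 < z.2} k),
      ← integral_add (hki.indicator hA) hi]
    congr with z
    simp only [Set.indicator, Set.mem_ofPred_eq, Prod.fst_swap, Prod.snd_swap, hk]
    rcases le_or_gt z.1 z.2 with h | h
    · simp [h, not_lt.2 h]
    · simp [h, not_le.2 h, min_comm, mul_comm]
  have e2 : ∫ z, Set.indicator {z | z.1 ≤ z.2} k z ∂(ν.prod ν)
      = ∫ t in Set.Ioc (0:ℝ) 1, w t * ∫ s in Set.Ioc 0 t, w s * s := by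
    rw [integral_prod_symm _ (hki.indicator hA)]
    refine setIntegral_congr_fun measurableSet_Ioc fun t ht => ?_
    have hset : Set.Ioc 0 t = Set.Ioc 0 1 ∩ Set.Iic t := by
      ext x; simp only [Set.mem_Ioc, Set.mem_inter_iff, Set.mem_Iic]
      exact ⟨fun h => ⟨⟨h.1, h.2.trans ht.2⟩, h.2⟩, fun h => ⟨h.1.1, h.2⟩⟩
    rw [hset, ← setIntegral_indicator measurableSet_Iic, ← integral_const_mul]
    congr with s
    simp only [Set.indicator, Set.mem_ofPred_eq, Set.mem_Iic, hk]
    split_ifs with h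
    · rw [min_eq_left h]; ring
    · simp
  have e3 : ∫ z, Set.indicator {z | z.1 < z.2} k z ∂(ν.prod ν)
      = ∫ t in Set.Ioc (0:ℝ) 1, w t * ∫ s in Set.Ioc 0 t, w s * s := by
    rw [integral_prod_symm _ (hki.indicator hA')]
    refine setIntegral_congr_fun measurableSet_Ioc fun t ht => ?_
    have hset : Set.Ioo 0 t = Set.Ioc 0 1 ∩ Set.Iio t := by
      ext x; simp only [Set.mem_Ioc, Set.mem_inter_iff, Set.mem_Iio, Set.mem_Ioo]
      exact ⟨fun h => ⟨⟨h.1, (h.2.trans_le ht.2).le⟩, h.2⟩, fun h => ⟨h.1.1, h.2⟩⟩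
    -- `{0 < s < t}` and `{0 < s ≤ t}` differ by a null set.
    rw [integral_Ioc_eq_integral_Ioo (x := 0) (y := t),
      hset, ← setIntegral_indicator measurableSet_Iio, ← integral_const_mul]
    congr with s
    simp only [Set.indicator, Set.mem_ofPred_eq, Set.mem_Iio, hk]
    split_ifs with h
    · rw [min_eq_left h.le]; ring
    · simp
  rw [e1, e2, e3]; ring

/-! ### The weights and their integrals -/

/-- The deterministic weight `f(s) = s^γ - (1+γ) s^{2γ}` in `U₁`; it is also, up to sign, the
coefficient of `W(1)` in the integrand. -/
noncomputable def uWeight (γ s : ℝ) : ℝ := s ^ γ - (1 + γ) * s ^ (2 * γ)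

/-- The coefficient of `W(s)` in the integrand of `γ U₁`. For `s > 0` it equals
`s⁻¹ - (1+γ) s^{γ-1}`. -/
noncomputable def bmWeight (γ s : ℝ) : ℝ := uWeight γ s * s ^ (-γ - 1)

theorem measurable_uWeight (γ : ℝ) : Measurable (uWeight γ) := by
  unfold uWeight; fun_prop

theorem measurable_bmWeight (γ : ℝ) : Measurable (bmWeight γ) := by
  unfold bmWeight; have := measurable_uWeight γ; fun_prop

theorem bmWeight_eq (γ : ℝ) {s : ℝ} (hs : 0 < s) :
    bmWeight γ s = s⁻¹ - (1 + γ) * s ^ (γ - 1) := by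
  unfold bmWeight uWeight
  rw [sub_mul, mul_assoc, ← Real.rpow_add hs, ← Real.rpow_add hs, ← Real.rpow_neg_one]
  ring_nf

theorem bmWeight_mul_self (γ : ℝ) {s : ℝ} (hs : 0 < s) :
    bmWeight γ s * s = 1 - (1 + γ) * s ^ γ := by
  rw [bmWeight_eq γ hs, Real.rpow_sub_one hs.ne']
  field_simp

theorem bmWeight_mul_sqrt (γ : ℝ) {s : ℝ} (hs : 0 < s) :
    bmWeight γ s * √s = s ^ (-1 / 2 : ℝ) - (1 + γ) * s ^ (γ - 1 / 2) := by
  rw [bmWeight_eq γ hs, Real.sqrt_eq_rpow, sub_mul, mul_assoc, ← Real.rpow_add hs,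
    ← Real.rpow_neg_one, ← Real.rpow_add hs]
  ring_nf

theorem integrableOn_rpow_Ioc {r : ℝ} (hr : -1 < r) {t : ℝ} (ht : 0 ≤ t) :
    IntegrableOn (fun s : ℝ => s ^ r) (Set.Ioc 0 t) :=
  (intervalIntegrable_iff_integrableOn_Ioc_of_le ht).1
    (intervalIntegral.intervalIntegrable_rpow' hr)

theorem integral_rpow_Ioc {r : ℝ} (hr : -1 < r) {t : ℝ} (ht : 0 ≤ t) :
    ∫ s in Set.Ioc 0 t, s ^ r = t ^ (r + 1) / (r + 1) := by
  rw [← intervalIntegral.integral_of_le ht, integral_rpow (Or.inl hr),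
    Real.zero_rpow (by linarith), sub_zero]





theorem integral_uWeight {γ : ℝ} (hγ : -1 / 2 < γ) :
    ∫ s in Set.Ioc (0 : ℝ) 1, uWeight γ s = 1 / (1 + γ) - (1 + γ) / (1 + 2 * γ) := by
  unfold uWeight
  rw [integral_sub (integrableOn_rpow_Ioc (by linarith) zero_le_one)
      ((integrableOn_rpow_Ioc (by linarith) zero_le_one).const_mul _), integral_const_mul,
    integral_rpow_Ioc (by linarith) zero_le_one, integral_rpow_Ioc (by linarith) zero_le_one]
  simp only [Real.one_rpow]
  ring

theorem integral_bmWeight_mul_self {γ : ℝ} (hγ : -1 / 2 < γ) {t : ℝ} (ht : 0 ≤ t) :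
    ∫ s in Set.Ioc 0 t, bmWeight γ s * s = t - t ^ (γ + 1) := by
  have h1 : 1 + γ ≠ 0 := by linarith
  have h2 : γ + 1 ≠ 0 := by linarith
  rw [setIntegral_congr_fun measurableSet_Ioc fun s hs => bmWeight_mul_self γ hs.1,
    integral_sub (by simp) ((integrableOn_rpow_Ioc (by linarith) ht).const_mul _),
    integral_const_mul, integral_rpow_Ioc (by linarith) ht]
  simp only [integral_const, MeasurableSet.univ, measureReal_restrict_apply, Set.univ_inter,
    Real.volume_real_Ioc_of_le ht, smul_eq_mul]
  field_simp
  ring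

theorem integral_bmWeight_mul_primitive {γ : ℝ} (hγ : -1 / 2 < γ) :
    ∫ t in Set.Ioc (0 : ℝ) 1, bmWeight γ t * ∫ s in Set.Ioc 0 t, bmWeight γ s * s =
      1 - (2 + γ) / (1 + γ) + (1 + γ) / (1 + 2 * γ) := by
  have h : ∀ t ∈ Set.Ioc (0 : ℝ) 1, bmWeight γ t * ∫ s in Set.Ioc 0 t, bmWeight γ s * s =
      1 - (2 + γ) * t ^ γ + (1 + γ) * t ^ (2 * γ) := by
    intro t ht
    rw [integral_bmWeight_mul_self hγ ht.1.le, Real.rpow_add_one ht.1.ne',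
      show bmWeight γ t * (t - t ^ γ * t) = (bmWeight γ t * t) * (1 - t ^ γ) by ring,
      bmWeight_mul_self γ ht.1, two_mul γ, Real.rpow_add ht.1]
    ring
  have i1 : IntegrableOn (fun _ : ℝ => (1 : ℝ)) (Set.Ioc 0 1) := by simp
  have i2 := (integrableOn_rpow_Ioc (r := γ) (by linarith) zero_le_one).const_mul (2 + γ)
  have i3 := (integrableOn_rpow_Ioc (r := 2 * γ) (by linarith) zero_le_one).const_mul (1 + γ)
  have i4 : IntegrableOn (fun t : ℝ => 1 - (2 + γ) * t ^ γ) (Set.Ioc 0 1) := i1.sub i2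
  rw [setIntegral_congr_fun measurableSet_Ioc h, integral_add i4 i3,
    integral_sub i1 i2, integral_const_mul, integral_const_mul,
    integral_rpow_Ioc (by linarith) zero_le_one, integral_rpow_Ioc (by linarith) zero_le_one]
  simp only [Real.one_rpow, integral_const, MeasurableSet.univ, measureReal_restrict_apply,
    Set.univ_inter, Real.volume_real_Ioc_of_le zero_le_one, smul_eq_mul]
  ring


/-! ### Mean and variance of `U₁` -/

/-- Measurability, mean and second moment of `γ U₁`. Stated for the bare integral, it needs no
assumption `γ ≠ 0`. -/
theorem moments_integral_uWeight {Ω : Type*} [MeasurableSpace Ω] {μ : Measure Ω} {W : ℝ → Ω → ℝ}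
    (hW : IsStdBrownian μ W) {γ : ℝ} (hγ : -1 / 2 < γ) :
    AEMeasurable (fun ω => ∫ s in Set.Ioc (0 : ℝ) 1,
      uWeight γ s * (s ^ (-γ - 1) * W s ω - W 1 ω)) μ ∧
    ∫ ω, (∫ s in Set.Ioc (0 : ℝ) 1, uWeight γ s * (s ^ (-γ - 1) * W s ω - W 1 ω)) ∂μ = 0 ∧
    ∫ ω, (∫ s in Set.Ioc (0 : ℝ) 1, uWeight γ s * (s ^ (-γ - 1) * W s ω - W 1 ω)) ^ 2 ∂μ =
      2 * (1 - (2 + γ) / (1 + γ) + (1 + γ) / (1 + 2 * γ)) +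
        (1 / (1 + γ) - (1 + γ) / (1 + 2 * γ)) ^ 2 := by
  have := hW.1
  set ν := volume.restrict (Set.Ioc (0 : ℝ) 1) with hν
  have hmem : ∀ᵐ s ∂ν, s ∈ Set.Ioc (0:ℝ) 1 := ae_restrict_mem measurableSet_Ioc
  have m1 := Measure.quasiMeasurePreserving_fst (μ := ν) (ν := ν) |>.ae hmem
  have m2 := Measure.quasiMeasurePreserving_snd (μ := ν) (ν := ν) |>.ae hmem
  set G : ℝ → Ω → ℝ := fun s ω => uWeight γ s * (s ^ (-γ - 1) * W s ω - W 1 ω) with hGdef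
  have hf := measurable_uWeight γ
  have hw := measurable_bmWeight γ
  have hG : Measurable (Function.uncurry G) := by
    have h1 : Measurable fun p : ℝ × Ω => W p.1 p.2 :=
      measurable_uncurry_of_continuous_of_measurable hW.2.2.1 hW.2.2.2.1
    have h2 : Measurable fun p : ℝ × Ω => W 1 p.2 := (hW.2.2.2.1 1).comp measurable_snd
    have h3 : Measurable fun p : ℝ × Ω => uWeight γ p.1 := hf.comp measurable_fst
    have h4 : Measurable fun p : ℝ × Ω => p.1 ^ (-γ - 1) := by fun_prop
    exact h3.mul ((h4.mul h1).sub h2)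
  have hGeq : ∀ s ω, G s ω = bmWeight γ s * W s ω - uWeight γ s * W 1 ω := by
    intro s ω; simp only [hGdef, bmWeight]; ring
  have hL1 := hW.memLp zero_le_one
  have hGL : ∀ s, 0 < s → MemLp (G s) 2 μ := by
    intro s hs
    have := ((hW.memLp hs.le).const_mul (bmWeight γ s)).sub (hL1.const_mul (uWeight γ s))
    exact this.congr_norm (hG.of_uncurry_left.aestronglyMeasurable)
      (ae_of_all _ fun ω => by simp [hGeq])
  have hcov : ∀ s ∈ Set.Ioc (0 : ℝ) 1, ∀ t ∈ Set.Ioc (0 : ℝ) 1, ∫ ω, G s ω * G t ω ∂μ =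
      bmWeight γ s * bmWeight γ t * min s t - (bmWeight γ s * s) * uWeight γ t
        - uWeight γ s * (bmWeight γ t * t) + uWeight γ s * uWeight γ t := by
    intro s hs t ht
    have hS := hW.memLp hs.1.le
    have hT := hW.memLp ht.1.le
    have i1 : Integrable (fun ω => bmWeight γ s * bmWeight γ t * (W s ω * W t ω)) μ :=
      (hS.integrable_mul hT).const_mul _
    have i2 : Integrable (fun ω => bmWeight γ s * uWeight γ t * (W s ω * W 1 ω)) μ :=
      (hS.integrable_mul hL1).const_mul _
    have i3 : Integrable (fun ω => uWeight γ s * bmWeight γ t * (W t ω * W 1 ω)) μ :=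
      (hT.integrable_mul hL1).const_mul _
    have i4 : Integrable (fun ω => uWeight γ s * uWeight γ t * (W 1 ω * W 1 ω)) μ :=
      (hL1.integrable_mul hL1).const_mul _
    calc ∫ ω, G s ω * G t ω ∂μ
        = ∫ ω, (bmWeight γ s * bmWeight γ t * (W s ω * W t ω)
            - bmWeight γ s * uWeight γ t * (W s ω * W 1 ω)
            - uWeight γ s * bmWeight γ t * (W t ω * W 1 ω)
            + uWeight γ s * uWeight γ t * (W 1 ω * W 1 ω)) ∂μ := by
          congr with ω; rw [hGeq, hGeq]; ring
      _ = _ := by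
          rw [integral_sub_sub_add i1 i2 i3 i4]
          simp only [integral_const_mul]
          rw [hW.integral_mul hs.1.le ht.1.le, hW.integral_mul hs.1.le zero_le_one,
            hW.integral_mul ht.1.le zero_le_one, hW.integral_mul zero_le_one zero_le_one,
            min_eq_left hs.2, min_eq_left ht.2, min_self]
          ring
  have hmean : ∀ s ∈ Set.Ioc (0 : ℝ) 1, ∫ ω, G s ω ∂μ = 0 := by
    intro s hs
    simp_rw [hGeq]
    rw [integral_sub (((hW.memLp hs.1.le).integrable (by norm_num)).const_mul _)
      ((hL1.integrable (by norm_num)).const_mul _), integral_const_mul, integral_const_mul,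
      hW.integral_eq hs.1.le, hW.integral_eq zero_le_one]
    ring
  have hfi : Integrable (uWeight γ) ν :=
    (integrableOn_rpow_Ioc (by linarith) zero_le_one).sub
      ((integrableOn_rpow_Ioc (by linarith) zero_le_one).const_mul _)
  have hwi : Integrable (fun s => bmWeight γ s * √s) ν := by
    have : IntegrableOn (fun s : ℝ => s ^ (-1 / 2 : ℝ) - (1 + γ) * s ^ (γ - 1 / 2))
        (Set.Ioc 0 1) :=
      (integrableOn_rpow_Ioc (by norm_num) zero_le_one).sub
        ((integrableOn_rpow_Ioc (by linarith) zero_le_one).const_mul _)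
    exact this.congr_fun (fun s hs => (bmWeight_mul_sqrt γ hs.1).symm) measurableSet_Ioc
  have hwsi : Integrable (fun s => bmWeight γ s * s) ν := by
    have : IntegrableOn (fun s : ℝ => 1 - (1 + γ) * s ^ γ) (Set.Ioc 0 1) :=
      Integrable.sub (by simp)
        ((integrableOn_rpow_Ioc (by linarith) zero_le_one).const_mul _)
    exact this.congr_fun (fun s hs => (bmWeight_mul_self γ hs.1).symm) measurableSet_Ioc
  have hB : Integrable (fun s => |bmWeight γ s * √s| + |uWeight γ s| + 1) ν :=
    (hwi.abs.add hfi.abs).add (integrable_const _)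
  -- The summand `1` only serves to make the majorant strictly positive.
  obtain ⟨hE, hV⟩ := moments_of_integral (μ := μ) hG hB
    (ae_of_all _ fun s => by positivity)
    (hmem.mono fun s hs => hGL s hs.1)
    (hmem.mono fun s hs => by
      have h := hcov s hs s hs
      simp_rw [← sq] at h
      rw [h, min_self]
      have hss : s ≤ √s := Real.le_sqrt_of_sq_le (by nlinarith [hs.1, hs.2])
      have hcross : -(bmWeight γ s * uWeight γ s) * s ≤ |bmWeight γ s * √s| * |uWeight γ s| := by
        rw [abs_mul, abs_of_nonneg (Real.sqrt_nonneg s)]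
        calc -(bmWeight γ s * uWeight γ s) * s ≤ |bmWeight γ s * uWeight γ s| * s := by
              gcongr
              · exact hs.1.le
              · exact neg_le_abs _
          _ ≤ |bmWeight γ s * uWeight γ s| * √s := by gcongr
          _ = _ := by rw [abs_mul]; ring
      have h1 : |bmWeight γ s * √s| ^ 2 = bmWeight γ s ^ 2 * s := by
        rw [sq_abs, mul_pow, Real.sq_sqrt hs.1.le]
      have h2 : |uWeight γ s| ^ 2 = uWeight γ s ^ 2 := sq_abs _
      have h3 := abs_nonneg (bmWeight γ s * √s)
      have h4 := abs_nonneg (uWeight γ s)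
      nlinarith)
  refine ⟨?_, ?_, ?_⟩
  · exact (hG.comp measurable_swap).stronglyMeasurable.integral_prod_right'.measurable.aemeasurable
  · rw [hE, setIntegral_congr_fun measurableSet_Ioc hmean]
    simp
  · obtain ⟨hki, hk⟩ := integral_prod_min hw hwi
    have j2 := hwsi.mul_prod hfi
    have j3 := hfi.mul_prod hwsi
    have j4 := hfi.mul_prod hfi
    have hcongr : (fun z : ℝ × ℝ => ∫ ω, G z.1 ω * G z.2 ω ∂μ) =ᵐ[ν.prod ν] fun z =>
        bmWeight γ z.1 * bmWeight γ z.2 * min z.1 z.2 - (bmWeight γ z.1 * z.1) * uWeight γ z.2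
        - uWeight γ z.1 * (bmWeight γ z.2 * z.2) + uWeight γ z.1 * uWeight γ z.2 := by
      filter_upwards [m1, m2] with z h1 h2 using hcov _ h1 _ h2
    rw [hV, integral_congr_ae hcongr, integral_sub_sub_add hki j2 j3 j4, hk,
      integral_prod_mul (fun s => bmWeight γ s * s) (uWeight γ),
      integral_prod_mul (uWeight γ) (fun s => bmWeight γ s * s),
      integral_prod_mul (uWeight γ) (uWeight γ), integral_bmWeight_mul_primitive hγ,
      integral_bmWeight_mul_self hγ zero_le_one, integral_uWeight hγ, Real.one_rpow]
    ring

/-- `E[U₁] = 0` and `Var(U₁) = (2+6γ₀+5γ₀²)/((1+γ₀)²(1+2γ₀)²)` for `γ₀ > -1/2`, `γ₀ ≠ 0`. -/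
theorem stmt_3 {Ω : Type*} [MeasurableSpace Ω] (μ : Measure Ω) (W : ℝ → Ω → ℝ)
    (hW : IsStdBrownian μ W) (γ₀ : ℝ) (hγ : -1/2 < γ₀) (hγ0 : γ₀ ≠ 0) :
    (∫ ω, Ustat1 W γ₀ ω ∂μ) = 0 ∧
    variance (Ustat1 W γ₀) μ = (2 + 6*γ₀ + 5*γ₀^2) / ((1+γ₀)^2 * (1+2*γ₀)^2) := by
  obtain ⟨hm, hE, hV⟩ := moments_integral_uWeight hW hγ
  have hU : Ustat1 W γ₀ = fun ω => (1 / γ₀) * ∫ s in Set.Ioc (0 : ℝ) 1,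
      uWeight γ₀ s * (s ^ (-γ₀ - 1) * W s ω - W 1 ω) := rfl
  have hmean : ∫ ω, Ustat1 W γ₀ ω ∂μ = 0 := by
    rw [hU, integral_const_mul, hE, mul_zero]
  refine ⟨hmean, ?_⟩
  rw [variance_of_integral_eq_zero (hU ▸ hm.const_mul _) hmean, hU]
  simp only [mul_pow]
  rw [integral_const_mul, hV]
  have h1 : 1 + γ₀ ≠ 0 := by linarith
  have h2 : 1 + 2 * γ₀ ≠ 0 := by linarith
  obtain ⟨d, hd⟩ : ∃ d, d = 1 + 2 * γ₀ := ⟨_, rfl⟩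
  rw [← hd] at h2 ⊢
  field_simp
  rw [hd]
  ring
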